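/- arXiv:2505.16775 — 2 statements merged into one kernel-verified Lean document; each statement's English description precedes it below -/
import Mathlib

section
/- Let X = ℝ³ with the coordinatewise order and the norm ‖(x,y,z)‖ = max{ |x| + |z|/2, |y| + |z|/2, (2/3)|x| + (2/3)|y| + |z|/3, (5/6)(|x| + |y|) }. Then this is a lattice norm making X a Banach lattice, and the resulting lattice satisfies λ⁺(X) ≤ 4/3 and β(X) = 15/11; in particular λ⁺(X) < β(X). -/
/-- The norm on `ℝ³` from Example `counterexample`:
`‖(x,y,z)‖ = max {|x| + |z|/2, |y| + |z|/2, (2/3)|x| + (2/3)|y| + |z|/3, (5/6)(|x| + |y|)}`. -/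
noncomputable def exNorm (u : ℝ × ℝ × ℝ) : ℝ :=
  max (max (|u.1| + |u.2.2| / 2) (|u.2.1| + |u.2.2| / 2))
      (max (2 / 3 * |u.1| + 2 / 3 * |u.2.1| + |u.2.2| / 3) (5 / 6 * (|u.1| + |u.2.1|)))

/-- The lattice Schäffer constant of `(ℝ³, exNorm)` (coordinatewise order):
`λ⁺ = inf {max (‖u+v‖, ‖u−v‖) : u, v ∈ S⁺}`. -/
noncomputable def lambdaPlusEx : ℝ :=
  sInf {r : ℝ | ∃ u v : ℝ × ℝ × ℝ, 0 ≤ u ∧ 0 ≤ v ∧ exNorm u = 1 ∧ exNorm v = 1 ∧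
    r = max (exNorm (u + v)) (exNorm (u - v))}

/-- The parameter `β` of `(ℝ³, exNorm)`:
`β = inf {‖u ⊔ v‖ : u, v ∈ S⁺, u ⊓ v = 0}`. -/
noncomputable def betaEx : ℝ :=
  sInf {r : ℝ | ∃ u v : ℝ × ℝ × ℝ, 0 ≤ u ∧ 0 ≤ v ∧ exNorm u = 1 ∧ exNorm v = 1 ∧
    u ⊓ v = 0 ∧ r = exNorm (u ⊔ v)}

theorem exNorm_nonneg' (u : ℝ × ℝ × ℝ) : 0 ≤ exNorm u := by
  unfold exNorm
  exact le_max_of_le_left (le_max_of_le_left (by positivity))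

theorem exNorm_mono' (u v : ℝ × ℝ × ℝ) (h1 : |u.1| ≤ |v.1|) (h2 : |u.2.1| ≤ |v.2.1|)
    (h3 : |u.2.2| ≤ |v.2.2|) : exNorm u ≤ exNorm v := by
  unfold exNorm
  gcongr

theorem exNorm_bounds (u : ℝ × ℝ × ℝ) : |u.1| + |u.2.2| / 2 ≤ exNorm u ∧
    |u.2.1| + |u.2.2| / 2 ≤ exNorm u ∧
    2 / 3 * |u.1| + 2 / 3 * |u.2.1| + |u.2.2| / 3 ≤ exNorm u ∧
    5 / 6 * (|u.1| + |u.2.1|) ≤ exNorm u := by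
  unfold exNorm
  simp only [le_max_iff, le_refl, true_or, or_true, and_self]

theorem exNorm_le_iff' (u : ℝ × ℝ × ℝ) (r : ℝ) : exNorm u ≤ r ↔ (|u.1| + |u.2.2| / 2 ≤ r ∧
    |u.2.1| + |u.2.2| / 2 ≤ r) ∧
    2 / 3 * |u.1| + 2 / 3 * |u.2.1| + |u.2.2| / 3 ≤ r ∧
    5 / 6 * (|u.1| + |u.2.1|) ≤ r := by
  unfold exNorm
  simp only [max_le_iff]

theorem lam_le : lambdaPlusEx ≤ 4 / 3 := by
  apply csInf_le
  · refine ⟨0, ?_⟩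
    rintro r ⟨u, v, -, -, -, -, rfl⟩
    exact le_max_of_le_left (exNorm_nonneg' _)
  · refine ⟨(4/5, 0, 2/5), (0, 4/5, 2/5), ?_, ?_, ?_, ?_, ?_⟩
    · simp only [Prod.le_def, Prod.fst_zero, Prod.snd_zero]; norm_num
    · simp only [Prod.le_def, Prod.fst_zero, Prod.snd_zero]; norm_num
    all_goals
      simp only [exNorm, Prod.mk_add_mk, Prod.mk_sub_mk]
      norm_num [abs_of_pos, abs_of_neg]

set_option maxHeartbeats 4000000 in
theorem beta_lower (u v : ℝ × ℝ × ℝ) (hu : 0 ≤ u) (hv : 0 ≤ v) (nu : exNorm u = 1)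
    (nv : exNorm v = 1) (h : u ⊓ v = 0) : 15 / 11 ≤ exNorm (u ⊔ v) := by
  obtain ⟨a, b, c⟩ := u
  obtain ⟨x, y, z⟩ := v
  simp only [Prod.le_def, Prod.fst_zero, Prod.snd_zero] at hu hv
  obtain ⟨ha, hb, hc⟩ := hu
  obtain ⟨hx, hy, hz⟩ := hv
  have h1 : min a x = 0 := congrArg (fun p : ℝ × ℝ × ℝ => p.1) h
  have h2 : min b y = 0 := congrArg (fun p : ℝ × ℝ × ℝ => p.2.1) h
  have h3 : min c z = 0 := congrArg (fun p : ℝ × ℝ × ℝ => p.2.2) h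
  have e1 : max a x = a + x := by have := min_add_max a x; linarith
  have e2 : max b y = b + y := by have := min_add_max b y; linarith
  have e3 : max c z = c + z := by have := min_add_max c z; linarith
  have hs : ((a, b, c) ⊔ (x, y, z) : ℝ × ℝ × ℝ) = (a + x, b + y, c + z) := by
    rw [← e1, ← e2, ← e3]; rfl
  rw [hs]
  have k1 : a = 0 ∨ x = 0 := by
    rcases min_choice a x with h | h <;> rw [h] at h1 <;> simp [h1]
  have k2 : b = 0 ∨ y = 0 := by
    rcases min_choice b y with h | h <;> rw [h] at h2 <;> simp [h2]
  have k3 : c = 0 ∨ z = 0 := by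
    rcases min_choice c z with h | h <;> rw [h] at h3 <;> simp [h3]
  obtain ⟨B1, B2, B3, B4⟩ := exNorm_bounds (a + x, b + y, c + z)
  generalize exNorm (a + x, b + y, c + z) = N at *
  have A1 := abs_of_nonneg (add_nonneg ha hx)
  have A2 := abs_of_nonneg (add_nonneg hb hy)
  have A3 := abs_of_nonneg (add_nonneg hc hz)
  simp only [A1, A2, A3] at B1 B2 B3 B4
  simp only [exNorm, abs_of_nonneg ha, abs_of_nonneg hb, abs_of_nonneg hc] at nu
  simp only [exNorm, abs_of_nonneg hx, abs_of_nonneg hy, abs_of_nonneg hz] at nv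
  clear h hs h1 h2 h3 e1 e2 e3 A1 A2 A3
  have mu : a + c/2 = 1 ∨ b + c/2 = 1 ∨ 2/3*a+2/3*b+c/3 = 1 ∨ 5/6*(a+b) = 1 := by
    rcases max_choice (max (a + c/2) (b + c/2)) (max (2/3*a+2/3*b+c/3) (5/6*(a+b))) with h | h
    · rcases max_choice (a + c/2) (b + c/2) with h' | h' <;> rw [h, h'] at nu <;> simp [nu]
    · rcases max_choice (2/3*a+2/3*b+c/3) (5/6*(a+b)) with h' | h' <;> rw [h, h'] at nu <;>
        simp [nu]
  have mv : x + z/2 = 1 ∨ y + z/2 = 1 ∨ 2/3*x+2/3*y+z/3 = 1 ∨ 5/6*(x+y) = 1 := by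
    rcases max_choice (max (x + z/2) (y + z/2)) (max (2/3*x+2/3*y+z/3) (5/6*(x+y))) with h | h
    · rcases max_choice (x + z/2) (y + z/2) with h' | h' <;> rw [h, h'] at nv <;> simp [nv]
    · rcases max_choice (2/3*x+2/3*y+z/3) (5/6*(x+y)) with h' | h' <;> rw [h, h'] at nv <;>
        simp [nv]
  have lu := nu.le
  have lv := nv.le
  simp only [max_le_iff] at lu lv
  obtain ⟨⟨u1, u2⟩, u3, u4⟩ := lu
  obtain ⟨⟨v1, v2⟩, v3, v4⟩ := lv
  clear nu nv
  rcases k1 with rfl | rfl <;> rcases k2 with rfl | rfl <;> rcases k3 with rfl | rfl <;>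
    rcases mu with m | m | m | m <;> rcases mv with n | n | n | n <;> linarith

theorem beta_eq : betaEx = 15 / 11 := by
  apply le_antisymm
  · apply csInf_le
    · refine ⟨0, ?_⟩
      rintro r ⟨u, v, -, -, -, -, -, rfl⟩
      exact exNorm_nonneg' _
    · refine ⟨(1, 0, 0), (0, 7/11, 8/11), ?_, ?_, ?_, ?_, ?_, ?_⟩
      · simp only [Prod.le_def, Prod.fst_zero, Prod.snd_zero]; norm_num
      · simp only [Prod.le_def, Prod.fst_zero, Prod.snd_zero]; norm_num
      · simp only [exNorm]; norm_num [abs_of_pos]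
      · simp only [exNorm]; norm_num [abs_of_pos]
      · refine Prod.ext ?_ (Prod.ext ?_ ?_) <;> simp <;> norm_num
      · have : (((1, 0, 0) : ℝ × ℝ × ℝ) ⊔ (0, 7/11, 8/11)) = (1, 7/11, 8/11) := by
          refine Prod.ext ?_ (Prod.ext ?_ ?_) <;> simp <;> norm_num
        rw [this]
        simp only [exNorm]; norm_num [abs_of_pos]
  · apply le_csInf
    · refine ⟨_, (1, 0, 0), (0, 1, 0), ?_, ?_, ?_, ?_, ?_, rfl⟩
      · simp only [Prod.le_def, Prod.fst_zero, Prod.snd_zero]; norm_num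
      · simp only [Prod.le_def, Prod.fst_zero, Prod.snd_zero]; norm_num
      · simp only [exNorm]; norm_num [abs_of_pos]
      · simp only [exNorm]; norm_num [abs_of_pos]
      · refine Prod.ext ?_ (Prod.ext ?_ ?_) <;> simp
    · rintro r ⟨u, v, hu, hv, nu, nv, h, rfl⟩
      exact beta_lower u v hu hv nu nv h

/-- `exNorm` is a lattice norm on `ℝ³` (with coordinatewise order), making it
a Banach lattice, and the resulting lattice satisfies `λ⁺ ≤ 4/3` and `β = 15/11`;
in particular `λ⁺ < β`. -/
theorem stmt5 :
    (∀ u : ℝ × ℝ × ℝ, exNorm u = 0 ↔ u = 0) ∧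
    (∀ (a : ℝ) (u : ℝ × ℝ × ℝ), exNorm (a • u) = |a| * exNorm u) ∧
    (∀ u v : ℝ × ℝ × ℝ, exNorm (u + v) ≤ exNorm u + exNorm v) ∧
    (∀ u v : ℝ × ℝ × ℝ, |u| ≤ |v| → exNorm u ≤ exNorm v) ∧
    lambdaPlusEx ≤ 4 / 3 ∧ betaEx = 15 / 11 ∧ lambdaPlusEx < betaEx := by
  refine ⟨?_, ?_, ?_, ?_, lam_le, beta_eq, ?_⟩
  · intro u
    constructor
    · intro h
      obtain ⟨B1, B2, -, -⟩ := exNorm_bounds u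
      rw [h] at B1 B2
      have p1 := abs_nonneg u.1
      have p2 := abs_nonneg u.2.1
      have p3 := abs_nonneg u.2.2
      refine Prod.ext ?_ (Prod.ext ?_ ?_)
      · exact abs_eq_zero.1 (by linarith)
      · exact abs_eq_zero.1 (by linarith)
      · exact abs_eq_zero.1 (by linarith)
    · rintro rfl
      simp [exNorm]
  · intro a u
    simp only [exNorm, Prod.smul_fst, Prod.smul_snd, smul_eq_mul, abs_mul,
      mul_max_of_nonneg _ _ (abs_nonneg a)]
    congr 2 <;> ring
  · intro u v
    obtain ⟨B1, B2, B3, B4⟩ := exNorm_bounds u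
    obtain ⟨C1, C2, C3, C4⟩ := exNorm_bounds v
    have p1 := abs_add_le u.1 v.1
    have p2 := abs_add_le u.2.1 v.2.1
    have p3 := abs_add_le u.2.2 v.2.2
    rw [exNorm_le_iff']
    simp only [Prod.fst_add, Prod.snd_add]
    refine ⟨⟨?_, ?_⟩, ?_, ?_⟩ <;> linarith
  · intro u v h
    exact exNorm_mono' u v h.1 h.2.1 h.2.2
  · rw [beta_eq]
    exact lam_le.trans_lt (by norm_num)
end

section
/- Let p ∈ [1, ∞) and let (E, Σ, μ) be a measure space containing two disjoint measurable sets of positive finite measure. Then the Banach lattice X = L_p(E, Σ, μ) of real-valued p-integrable functions satisfies λ⁺(X) = β(X) = 2^{1/p}. -/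
/-- The lattice Schäffer constant of a Banach lattice `X`:
`λ⁺(X) = inf {max (‖x+y‖, ‖x−y‖) : x, y ∈ S_X⁺}`. -/
noncomputable def lambdaPlus (X : Type*) [NormedAddCommGroup X] [Lattice X] : ℝ :=
  sInf {r : ℝ | ∃ x y : X, 0 ≤ x ∧ 0 ≤ y ∧ ‖x‖ = 1 ∧ ‖y‖ = 1 ∧ r = max ‖x + y‖ ‖x - y‖}

/-- The parameter `β(X) = inf {‖x ⊔ y‖ : x, y ∈ S_X⁺, x ⊓ y = 0}`. -/
noncomputable def betaParam (X : Type*) [NormedAddCommGroup X] [Lattice X] : ℝ :=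
  sInf {r : ℝ | ∃ x y : X, 0 ≤ x ∧ 0 ≤ y ∧ ‖x‖ = 1 ∧ ‖y‖ = 1 ∧ x ⊓ y = 0 ∧ r = ‖x ⊔ y‖}

/-- The Riesz angle `α(X) = sup {‖x ⊔ y‖ : x, y ∈ B_X⁺}`. -/
noncomputable def rieszAngle (X : Type*) [NormedAddCommGroup X] [Lattice X] : ℝ :=
  sSup {r : ℝ | ∃ x y : X, 0 ≤ x ∧ 0 ≤ y ∧ ‖x‖ ≤ 1 ∧ ‖y‖ ≤ 1 ∧ r = ‖x ⊔ y‖}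

/-- The Schäffer constant `λ(X) = inf {max (‖x+y‖, ‖x−y‖) : x, y ∈ S_X}`. -/
noncomputable def schafferConst (X : Type*) [NormedAddCommGroup X] : ℝ :=
  sInf {r : ℝ | ∃ x y : X, ‖x‖ = 1 ∧ ‖y‖ = 1 ∧ r = max ‖x + y‖ ‖x - y‖}

/-- The James constant `J(X) = sup {min (‖x+y‖, ‖x−y‖) : x, y ∈ S_X}`. -/
noncomputable def jamesConst (X : Type*) [NormedAddCommGroup X] : ℝ :=
  sSup {r : ℝ | ∃ x y : X, ‖x‖ = 1 ∧ ‖y‖ = 1 ∧ r = min ‖x + y‖ ‖x - y‖}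


open MeasureTheory

lemma aux_norm {E : Type*} [MeasurableSpace E] (μ : Measure E) (p : ℝ) (hp : 1 ≤ p)
    (f : Lp ℝ (ENNReal.ofReal p) μ) : ‖f‖ ^ p = ∫ a, ‖f a‖ ^ p ∂μ := by
  have hp0 : 0 < p := by linarith
  have h1 := (Lp.memLp f).eLpNorm_eq_integral_rpow_norm (by simpa using hp0) (by simp)
  rw [ENNReal.toReal_ofReal hp0.le] at h1
  have hI : 0 ≤ ∫ a, ‖f a‖ ^ p ∂μ := integral_nonneg fun a => by positivity
  rw [Lp.norm_def, h1, ENNReal.toReal_ofReal (by positivity), ← Real.rpow_mul hI,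
    inv_mul_cancel₀ hp0.ne', Real.rpow_one]

lemma aux_int {E : Type*} [MeasurableSpace E] (μ : Measure E) (p : ℝ) (hp : 1 ≤ p)
    (f : Lp ℝ (ENNReal.ofReal p) μ) : Integrable (fun a => ‖f a‖ ^ p) μ := by
  have h1 := (Lp.memLp f).integrable_norm_rpow (by simp; linarith) (by simp)
  rwa [ENNReal.toReal_ofReal (by linarith)] at h1

lemma aux_ge {E : Type*} [MeasurableSpace E] (μ : Measure E) (p : ℝ) (hp : 1 ≤ p)
    (x y : Lp ℝ (ENNReal.ofReal p) μ) (hx : 0 ≤ x) (hy : 0 ≤ y) :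
    ‖x‖ ^ p + ‖y‖ ^ p ≤ ‖x + y‖ ^ p := by
  rw [aux_norm μ p hp, aux_norm μ p hp, aux_norm μ p hp,
    ← integral_add (aux_int μ p hp x) (aux_int μ p hp y)]
  refine integral_mono_ae ((aux_int μ p hp x).add (aux_int μ p hp y)) (aux_int μ p hp _) ?_
  filter_upwards [(Lp.coeFn_nonneg x).2 hx, (Lp.coeFn_nonneg y).2 hy, Lp.coeFn_add x y]
    with a h1 h2 h3
  simp only [Pi.zero_apply] at h1 h2
  simp only [h3, Pi.add_apply, Real.norm_eq_abs]
  rw [abs_of_nonneg h1, abs_of_nonneg h2, abs_of_nonneg (add_nonneg h1 h2)]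
  exact Real.add_rpow_le_rpow_add h1 h2 hp

lemma aux_eq {E : Type*} [MeasurableSpace E] (μ : Measure E) (p : ℝ) (hp : 1 ≤ p)
    (x y : Lp ℝ (ENNReal.ofReal p) μ) (hxy : x ⊓ y = 0) :
    ‖x + y‖ ^ p = ‖x‖ ^ p + ‖y‖ ^ p := by
  rw [aux_norm μ p hp, aux_norm μ p hp, aux_norm μ p hp,
    ← integral_add (aux_int μ p hp x) (aux_int μ p hp y)]
  have h0 := Lp.coeFn_inf x y
  rw [hxy] at h0
  refine integral_congr_ae ?_
  filter_upwards [h0, Lp.coeFn_zero ℝ (ENNReal.ofReal p) μ, Lp.coeFn_add x y] with a h1 h2 h3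
  rw [h2] at h1
  simp only [Pi.zero_apply, Pi.inf_apply] at h1
  simp only [h3, Pi.add_apply]
  have hp0 : p ≠ 0 := by linarith
  rcases min_choice (x a) (y a) with h | h
  · have : x a = 0 := h.symm.trans h1.symm
    simp [this, Real.zero_rpow hp0]
  · have : y a = 0 := h.symm.trans h1.symm
    simp [this, Real.zero_rpow hp0]

lemma aux_ex {E : Type*} [MeasurableSpace E] (μ : Measure E) (p : ℝ) (hp : 1 ≤ p)
    (h : ∃ A B : Set E, MeasurableSet A ∧ MeasurableSet B ∧ Disjoint A B ∧
      0 < μ A ∧ μ A < ⊤ ∧ 0 < μ B ∧ μ B < ⊤) :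
    ∃ x y : Lp ℝ (ENNReal.ofReal p) μ, 0 ≤ x ∧ 0 ≤ y ∧ ‖x‖ = 1 ∧ ‖y‖ = 1 ∧ x ⊓ y = 0 := by
  obtain ⟨A, B, hA, hB, hd, hA0, hA1, hB0, hB1⟩ := h
  have hp0 : 0 < p := by linarith
  have key : ∀ C : Set E, 0 < μ C → μ C < ⊤ → 0 < μ.real C ^ (1 / p) := fun C h0 h1 =>
    Real.rpow_pos_of_pos (ENNReal.toReal_pos h0.ne' h1.ne) _
  have key2 : ∀ (C : Set E) (hC : MeasurableSet C) (h0 : 0 < μ C) (h1 : μ C < ⊤),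
      ‖indicatorConstLp (ENNReal.ofReal p) hC h1.ne ((μ.real C ^ (1 / p))⁻¹ : ℝ)‖ = 1 := by
    intro C hC h0 h1
    rw [norm_indicatorConstLp (by simpa using hp0) (by simp), ENNReal.toReal_ofReal hp0.le,
      Real.norm_of_nonneg (inv_nonneg.2 (key C h0 h1).le), inv_mul_cancel₀ (key C h0 h1).ne']
  refine ⟨_, _, ?_, ?_, key2 A hA hA0 hA1, key2 B hB hB0 hB1, ?_⟩
  · rw [← Lp.coeFn_nonneg]
    filter_upwards [indicatorConstLp_coeFn (p := ENNReal.ofReal p) (hs := hA) (hμs := hA1.ne)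
      (c := ((μ.real A ^ (1 / p))⁻¹ : ℝ))] with a ha
    rw [ha]
    exact Set.indicator_nonneg (fun _ _ => inv_nonneg.2 (key A hA0 hA1).le) _
  · rw [← Lp.coeFn_nonneg]
    filter_upwards [indicatorConstLp_coeFn (p := ENNReal.ofReal p) (hs := hB) (hμs := hB1.ne)
      (c := ((μ.real B ^ (1 / p))⁻¹ : ℝ))] with a ha
    rw [ha]
    exact Set.indicator_nonneg (fun _ _ => inv_nonneg.2 (key B hB0 hB1).le) _
  · apply Lp.ext
    refine (Lp.coeFn_inf _ _).trans ?_
    filter_upwards [indicatorConstLp_coeFn (p := ENNReal.ofReal p) (hs := hA) (hμs := hA1.ne)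
      (c := ((μ.real A ^ (1 / p))⁻¹ : ℝ)),
      indicatorConstLp_coeFn (p := ENNReal.ofReal p) (hs := hB) (hμs := hB1.ne)
      (c := ((μ.real B ^ (1 / p))⁻¹ : ℝ)), Lp.coeFn_zero ℝ (ENNReal.ofReal p) μ] with a ha hb h0
    rw [Pi.inf_apply, ha, hb, h0]
    have k1 := (inv_pos.2 (key A hA0 hA1)).le
    have k2 := (inv_pos.2 (key B hB0 hB1)).le
    by_cases h1 : a ∈ A
    · have h2 : a ∉ B := Set.disjoint_left.1 hd h1
      rw [Set.indicator_of_mem h1, Set.indicator_of_notMem h2]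
      exact inf_eq_right.2 k1
    · rw [Set.indicator_of_notMem h1]
      exact inf_eq_left.2 (Set.indicator_nonneg (fun _ _ => k2) _)

/-- for `p ∈ [1, ∞)` and a measure space containing two disjoint measurable
sets of positive finite measure, `λ⁺(L_p(μ)) = β(L_p(μ)) = 2^(1/p)`. -/
theorem stmt6 {E : Type*} [MeasurableSpace E] (μ : Measure E) (p : ℝ) (hp : 1 ≤ p)
    (h : ∃ A B : Set E, MeasurableSet A ∧ MeasurableSet B ∧ Disjoint A B ∧
      0 < μ A ∧ μ A < ⊤ ∧ 0 < μ B ∧ μ B < ⊤) :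
    letI : Fact (1 ≤ ENNReal.ofReal p) := ⟨ENNReal.one_le_ofReal.mpr hp⟩
    lambdaPlus (Lp ℝ (ENNReal.ofReal p) μ) = (2 : ℝ) ^ (1 / p) ∧
    betaParam (Lp ℝ (ENNReal.ofReal p) μ) = (2 : ℝ) ^ (1 / p) := by

  have : Fact (1 ≤ ENNReal.ofReal p) := ⟨ENNReal.one_le_ofReal.mpr hp⟩
  have hp0 : 0 < p := by linarith
  have root : ∀ t : ℝ, 0 ≤ t → t ^ p = 2 → t = (2 : ℝ) ^ (1 / p) := by
    intro t ht h2
    rw [← h2, ← Real.rpow_mul ht, mul_one_div_cancel hp0.ne', Real.rpow_one]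
  have lower : ∀ x y : Lp ℝ (ENNReal.ofReal p) μ, 0 ≤ x → 0 ≤ y → ‖x‖ = 1 → ‖y‖ = 1 →
      (2 : ℝ) ^ (1 / p) ≤ ‖x + y‖ := by
    intro x y hx hy h1 h2
    have h3 := aux_ge μ p hp x y hx hy
    rw [h1, h2, Real.one_rpow] at h3
    have h4 : (2 : ℝ) ≤ ‖x + y‖ ^ p := by linarith
    calc (2 : ℝ) ^ (1 / p) ≤ (‖x + y‖ ^ p) ^ (1 / p) :=
          Real.rpow_le_rpow (by norm_num) h4 (by positivity)
      _ = ‖x + y‖ := by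
          rw [← Real.rpow_mul (norm_nonneg _), mul_one_div_cancel hp0.ne', Real.rpow_one]
  have hsup : ∀ x y : Lp ℝ (ENNReal.ofReal p) μ, x ⊓ y = 0 → x ⊔ y = x + y := by
    intro x y hxy
    have := inf_add_sup x y
    rwa [hxy, zero_add] at this
  obtain ⟨x, y, hx, hy, hx1, hy1, hxy⟩ := aux_ex μ p hp h
  have hs : ‖x + y‖ = (2 : ℝ) ^ (1 / p) := by
    refine root _ (norm_nonneg _) ?_
    rw [aux_eq μ p hp x y hxy, hx1, hy1, Real.one_rpow]; norm_num
  have hdiff : ‖x - y‖ = ‖x + y‖ := by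
    have h1 := sup_sub_inf_eq_abs_sub x y
    rw [hxy, sub_zero, hsup x y hxy] at h1
    rw [h1, norm_abs_eq_norm, norm_sub_rev]
  constructor
  · refine IsLeast.csInf_eq ⟨⟨x, y, hx, hy, hx1, hy1, ?_⟩, ?_⟩
    · rw [hdiff, max_self, hs]
    · rintro r ⟨u, v, hu, hv, h1, h2, rfl⟩
      exact (lower u v hu hv h1 h2).trans (le_max_left _ _)
  · refine IsLeast.csInf_eq ⟨⟨x, y, hx, hy, hx1, hy1, hxy, ?_⟩, ?_⟩
    · rw [hsup x y hxy, hs]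
    · rintro r ⟨u, v, hu, hv, h1, h2, h3, rfl⟩
      rw [hsup u v h3]
      exact lower u v hu hv h1 h2
end
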